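/- The factor complexity of u_p = u(1^ω,(EERR)^ω) satisfies limsup_{n→∞} C(n)/n ≥ 4 + ((τ'+5)/(τ+5))·(2τ/(τ−1)), where τ = 7+4√3 and τ' = 7−4√3; in particular limsup C(n)/n ≥ 4.577. -/

import Mathlib

abbrev Word := List Bool

/-- The exchange antimorphism `E`: complement each letter and reverse. -/
def Ebar (w : Word) : Word := (w.map Bool.not).reverse

def IsPal (w : Word) : Prop := w.reverse = w
def IsEPal (w : Word) : Prop := Ebar w = w

open Classical in
lemma exists_minLength {Q : Word → Prop} (hex : ∃ v, Q v) :
    ∃ v, Q v ∧ ∀ v', Q v' → v.length ≤ v'.length := by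
  classical
  have h : ∃ n, ∃ v, Q v ∧ v.length = n := ⟨_, hex.choose, hex.choose_spec, rfl⟩
  obtain ⟨v, hv, hlen⟩ := Nat.find_spec h
  exact ⟨v, hv, fun v' hv' => by
    rw [hlen]; exact Nat.find_min' h ⟨v', hv', rfl⟩⟩

lemma pal_ext (w : Word) : ∃ v, w <+: v ∧ IsPal v :=
  ⟨w ++ w.reverse, List.prefix_append _ _, by simp [IsPal]⟩

lemma epal_ext (w : Word) : ∃ v, w <+: v ∧ IsEPal v :=
  ⟨w ++ Ebar w, List.prefix_append _ _, by
    simp [IsEPal, Ebar, List.map_reverse, List.map_map, Function.comp_def, Bool.not_not]⟩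

/-- The palindromic closure: the shortest palindrome having `w` as a prefix. -/
noncomputable def palCl (w : Word) : Word := (exists_minLength (pal_ext w)).choose

/-- The pseudopalindromic closure: the shortest `E`-palindrome having `w` as a prefix. -/
noncomputable def epalCl (w : Word) : Word := (exists_minLength (epal_ext w)).choose

/-- Prefixes of the generalized pseudostandard word `u(1^ω, (EERR)^ω)`
(the letter `1` is `true`). -/
noncomputable def wp : ℕ → Word
  | 0 => []
  | n+1 => if (n+1) % 4 = 1 ∨ (n+1) % 4 = 2
           then epalCl (wp n ++ [true])
           else palCl (wp n ++ [true])

/-- Factors of `u_p`. -/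
def FactorUp (v : Word) : Prop := ∃ n, v <:+: wp n

/-- Factor complexity of `u_p`. -/
noncomputable def Cp (n : ℕ) : ℕ := Set.ncard {v : Word | FactorUp v ∧ v.length = n}


open Filter

/-!
Let `d = diff` be the word whose letters record whether consecutive letters of `u_p` differ. The
prefix of length `n + 1` of `u_p` is a palindrome or an `E`-palindrome exactly when the prefix of
length `n` of `d` is a palindrome, and the palindromic prefixes of `d` of length at least `3` have
lengths `a₀ < b₀ < a₁ < b₁ < ⋯` with `bₘ = 2 aₘ - 2` for even `m`, `bₘ = 2 aₘ + 3` for odd `m` and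
`aₘ₊₂ = 2 bₘ₊₁ - aₘ`. Every factor of `d` is the difference word of two complementary factors of
`u_p`, so that `C(n + 1)` is twice the complexity of `d` at `n`.

The complexity of the binary word `d` grows at `n` by the number of its left special factors of
length `n`. All prefixes of `d` are left special, and for every `m` there is a left special factor
that leaves the prefix of `d` after `bₘ` letters and stays left special up to length
`bₘ₊₁ + 2 (bₘ - aₘ)`. Hence the growth is at least `2`, and at least `3` for
`bₘ₊₁ < n ≤ bₘ₊₁ + 2 (bₘ - aₘ)`. Summing up, the complexity of `d` at
`n = bₘ₊₁ + 2 (bₘ - aₘ) + 1 ≤ 2 (aₘ₊₁ + aₘ) + O(1)` is at least `2 n + aₘ₊₁ - aₘ - O(1)`. Since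
`aₘ₊₁ ≥ (2 + √3) aₘ - O(1)`, this gives `C(n) ≥ (4 + √3 / 3) n - O(1)` at these lengths, and
`4 + √3 / 3` is the constant of the theorem.

The `limsup` of an unbounded sequence of reals has the junk value `0`, so a linear upper bound for
`C` is needed too; it holds because every factor of `d` of length at most `aⱼ` occurs in the prefix
of length `bⱼ₊₁`.
-/

namespace Pseudostandard

section PalindromicPrefixes

variable {α : Type*} {f : ℕ → α} {m n q : ℕ}

/-- The prefix of length `n` of the infinite word `f` is a palindrome. -/
def IsPalPrefix (f : ℕ → α) (n : ℕ) : Prop :=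
  ∀ i j, i + j + 1 = n → f i = f j

lemma IsPalPrefix.apply_add (hm : IsPalPrefix f m) (hn : IsPalPrefix f n) {x t : ℕ}
    (hx : x + m = n) (ht : t < m) : f (x + t) = f t :=
  (hn (x + t) (m - 1 - t) (by omega)).trans (hm _ _ (by omega))

lemma IsPalPrefix.apply_add_eq_of_add_eq_two_mul (hn : IsPalPrefix f n) (hq : IsPalPrefix f q)
    (hm : q + m = 2 * n) {i : ℕ} (hi : n + i < q) : f (n + i) = f (m + i) :=
  (hq (n + i) (q - 1 - n - i) (by omega)).trans (hn _ _ (by omega))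

lemma IsPalPrefix.reflect (hn : IsPalPrefix f n)
    (hq : ∀ i j, i + j + 1 = q → i ≤ n → j ≤ n → f i = f j) (hnq : n < q) (hm : q + m = 2 * n) :
    IsPalPrefix f m ∧ f m = f n := by
  refine ⟨fun i j hij => ?_, ?_⟩
  · calc f i = f (n - 1 - i) := hn _ _ (by omega)
      _ = f (q - n + i) := hq _ _ (by omega) (by omega) (by omega)
      _ = f j := hn _ _ (by omega)
  · calc f m = f (q - 1 - n) := hn _ _ (by omega)
      _ = f n := hq _ _ (by omega) (by omega) le_rfl

end PalindromicPrefixes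

lemma isPal_append_drop {p w : Word} (hpw : p <+: w) (hp : IsPal p) (hw : IsPal w) :
    IsPal (w ++ w.drop p.length) := by
  obtain ⟨s, rfl⟩ := hpw
  unfold IsPal at *
  have hs : s.reverse ++ p = p ++ s := by rwa [List.reverse_append, hp] at hw
  rw [List.drop_left, List.reverse_append, hw, ← List.append_assoc, hs]

/-- The step from `aWord m` to `bWord m`: `bExt m (aWord m) = bWord m`. -/
def bExt (m : ℕ) (w : Word) : Word :=
  if m % 2 = 0 then w ++ w.drop 2 else w ++ ([false, true, false] ++ w)

/-- Together with `bWord m`, the palindromic prefixes of length at least `3` of the difference word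
`diff` of `u_p`. -/
def aWord : ℕ → Word
  | 0 => [true, true, true]
  | 1 => [true, true, true, true, false, true, true, true, true]
  | m + 2 => bExt (m + 1) (aWord (m + 1)) ++ (bExt (m + 1) (aWord (m + 1))).drop (aWord m).length

/-- The palindromic prefix of `diff` between `aWord m` and `aWord (m + 1)`. -/
def bWord (m : ℕ) : Word := bExt m (aWord m)

/-- The length of `aWord m`. -/
def aLen (m : ℕ) : ℕ := (aWord m).length

/-- The length of `bWord m`. -/
def bLen (m : ℕ) : ℕ := (bWord m).length

lemma aWord_add_two (m : ℕ) : aWord (m + 2) = bWord (m + 1) ++ (bWord (m + 1)).drop (aLen m) := rfl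

lemma aLen_zero : aLen 0 = 3 := rfl

lemma aLen_one : aLen 1 = 9 := rfl

lemma bLen_zero : bLen 0 = 4 := rfl

lemma bWord_of_even {m : ℕ} (hm : m % 2 = 0) : bWord m = aWord m ++ (aWord m).drop 2 :=
  if_pos hm

lemma bWord_of_odd {m : ℕ} (hm : m % 2 = 1) :
    bWord m = aWord m ++ ([false, true, false] ++ aWord m) :=
  if_neg (by omega)

lemma aWord_prefix_bWord (m : ℕ) : aWord m <+: bWord m := by
  unfold bWord bExt
  split <;> exact List.prefix_append _ _

lemma bWord_prefix_aWord_succ : ∀ m, bWord m <+: aWord (m + 1)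
  | 0 => by decide
  | m + 1 => by rw [aWord_add_two]; exact List.prefix_append _ _

lemma aWord_prefix_aWord_of_le {m n : ℕ} (h : m ≤ n) : aWord m <+: aWord n := by
  induction h with
  | refl => exact List.prefix_rfl
  | step _ ih => exact ih.trans ((aWord_prefix_bWord _).trans (bWord_prefix_aWord_succ _))

lemma isPal_bWord {m : ℕ} (h : IsPal (aWord m)) : IsPal (bWord m) := by
  rcases Nat.mod_two_eq_zero_or_one m with hm | hm
  · rw [bWord_of_even hm]
    exact isPal_append_drop (p := [true, true])
      ((by decide : [true, true] <+: aWord 0).trans (aWord_prefix_aWord_of_le m.zero_le)) rfl h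
  · rw [bWord_of_odd hm]
    unfold IsPal at *
    simp [h]

lemma isPal_aWord (m : ℕ) : IsPal (aWord m) := by
  induction m using Nat.twoStepInduction with
  | zero => rfl
  | one => rfl
  | more m ihm ihm' =>
    exact isPal_append_drop
      ((aWord_prefix_aWord_of_le m.le_succ).trans (aWord_prefix_bWord _)) ihm (isPal_bWord ihm')

lemma three_le_aLen (m : ℕ) : 3 ≤ aLen m :=
  (aWord_prefix_aWord_of_le m.zero_le).length_le

lemma bLen_of_even {m : ℕ} (hm : m % 2 = 0) : bLen m + 2 = 2 * aLen m := by
  have h := three_le_aLen m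
  simp only [aLen, bLen, bWord_of_even hm, List.length_append, List.length_drop] at h ⊢
  omega

lemma bLen_of_odd {m : ℕ} (hm : m % 2 = 1) : bLen m = 2 * aLen m + 3 := by
  simp only [aLen, bLen, bWord_of_odd hm, List.length_append, List.length_cons, List.length_nil]
  omega

lemma bLen_le (m : ℕ) : bLen m ≤ 2 * aLen m + 3 := by
  rcases Nat.mod_two_eq_zero_or_one m with hm | hm
  · have := bLen_of_even hm
    omega
  · exact (bLen_of_odd hm).le

lemma aLen_lt_bLen (m : ℕ) : aLen m < bLen m := by
  have h := three_le_aLen m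
  rcases Nat.mod_two_eq_zero_or_one m with hm | hm
  · have := bLen_of_even hm
    omega
  · have := bLen_of_odd hm
    omega

lemma aLen_lt_bLen_succ (m : ℕ) : aLen m < bLen (m + 1) :=
  (aWord_prefix_aWord_of_le m.le_succ).length_le.trans_lt (aLen_lt_bLen _)

lemma aLen_add_two (m : ℕ) : aLen (m + 2) + aLen m = 2 * bLen (m + 1) := by
  have h := aLen_lt_bLen_succ m
  simp only [aLen, bLen, aWord_add_two, List.length_append, List.length_drop] at h ⊢
  omega

lemma bLen_lt_aLen_succ : ∀ m, bLen m < aLen (m + 1)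
  | 0 => by decide
  | m + 1 => by
    change bLen (m + 1) < aLen (m + 2)
    have := aLen_add_two m
    have := aLen_lt_bLen_succ m
    omega

lemma aLen_strictMono : StrictMono aLen :=
  strictMono_nat_of_lt_succ fun m => (aLen_lt_bLen m).trans (bLen_lt_aLen_succ m)

lemma bLen_strictMono : StrictMono bLen :=
  strictMono_nat_of_lt_succ fun m => (bLen_lt_aLen_succ m).trans (aLen_lt_bLen (m + 1))

lemma lt_aLen (m : ℕ) : m < aLen m := by
  induction m with
  | zero => decide
  | succ m ih => exact (Nat.succ_le_of_lt ih).trans_lt (aLen_strictMono m.lt_succ_self)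

lemma aLen_succ_le : ∀ m, aLen (m + 1) ≤ 5 * aLen m
  | 0 => by decide
  | m + 1 => by
    change aLen (m + 2) ≤ 5 * aLen (m + 1)
    have := aLen_add_two m
    have := bLen_le (m + 1)
    have := three_le_aLen m
    have := three_le_aLen (m + 1)
    omega

lemma two_mul_bLen_le : ∀ m, 2 * bLen m ≤ aLen (m + 1) + aLen m
  | 0 => by decide
  | m + 1 => (aLen_add_two m).ge.trans
      (Nat.add_le_add_left (aLen_strictMono.monotone m.le_succ) _)

lemma bLen_succ_add_lt_bLen_add_two (m : ℕ) :
    bLen (m + 1) + 2 * (bLen m - aLen m) < bLen (m + 2) := by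
  have := aLen_lt_bLen m
  have := aLen_lt_bLen (m + 2)
  have := aLen_add_two m
  have := aLen_lt_bLen (m + 1)
  have := two_mul_bLen_le m
  omega

lemma four_mul_aLen_succ_le (m : ℕ) : 4 * aLen (m + 1) ≤ aLen (m + 2) + aLen m + 4 := by
  have := aLen_add_two m
  rcases Nat.mod_two_eq_zero_or_one (m + 1) with hm | hm
  · have := bLen_of_even hm
    omega
  · have := bLen_of_odd hm
    omega

lemma exists_aLen_lt_le_aLen_succ {q : ℕ} (hq : 3 < q) : ∃ m, aLen m < q ∧ q ≤ aLen (m + 1) :=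
  aLen_strictMono.exists_between_of_tendsto_atTop aLen_strictMono.tendsto_atTop hq

/-- The difference word `d` of `u_p`: `d i` records whether the letters `i` and `i + 1` of `u_p`
differ. It is the limit of the words `aWord m`. -/
def diff (i : ℕ) : Bool := (aWord i).getD i false

lemma diff_eq_getD_of_prefix {w : Word} {m i : ℕ} (h : w <+: aWord m) (hi : i < w.length) :
    diff i = w.getD i false := by
  obtain ⟨j, hm, hj⟩ : ∃ j, m ≤ j ∧ i ≤ j := ⟨max m i, le_max_left _ _, le_max_right _ _⟩
  have hw := h.trans (aWord_prefix_aWord_of_le hm)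
  have ha := aWord_prefix_aWord_of_le hj
  have hia : i < (aWord i).length := lt_aLen i
  simp only [diff, List.getD_eq_getElem _ _ hia, List.getD_eq_getElem _ _ hi, hw.getElem hi,
    ha.getElem hia]

lemma diff_eq_getD {i : ℕ} (hi : i < 9) :
    diff i = [true, true, true, true, false, true, true, true, true].getD i false :=
  diff_eq_getD_of_prefix (m := 1) List.prefix_rfl hi

lemma isPalPrefix_of_prefix {w : Word} {m : ℕ} (h : w <+: aWord m) (hw : IsPal w) :
    IsPalPrefix diff w.length := by
  intro i j hij
  have hi : i < w.length := by omega
  have hj : j < w.length := by omega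
  rw [diff_eq_getD_of_prefix h hi, diff_eq_getD_of_prefix h hj, List.getD_eq_getElem _ _ hi,
    List.getD_eq_getElem _ _ hj, List.getElem_of_eq hw.symm hi, List.getElem_reverse]
  congr 1
  omega

lemma isPalPrefix_aLen (m : ℕ) : IsPalPrefix diff (aLen m) :=
  isPalPrefix_of_prefix List.prefix_rfl (isPal_aWord m)

lemma isPalPrefix_bLen (m : ℕ) : IsPalPrefix diff (bLen m) :=
  isPalPrefix_of_prefix (bWord_prefix_aWord_succ m) (isPal_bWord (isPal_aWord m))

lemma diff_bLen_succ_add {m i : ℕ} (hi : bLen (m + 1) + i < aLen (m + 2)) :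
    diff (bLen (m + 1) + i) = diff (aLen m + i) :=
  (isPalPrefix_bLen _).apply_add_eq_of_add_eq_two_mul (isPalPrefix_aLen _) (aLen_add_two m) hi

lemma diff_aLen_add_of_even {m i : ℕ} (hm : m % 2 = 0) (hi : aLen m + i < bLen m) :
    diff (aLen m + i) = diff (2 + i) :=
  (isPalPrefix_aLen m).apply_add_eq_of_add_eq_two_mul (isPalPrefix_bLen m) (bLen_of_even hm) hi

lemma diff_aLen_add_of_odd {m i : ℕ} (hm : m % 2 = 1) (hi : i < 3) :
    diff (aLen m + i) = [false, true, false].getD i false := by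
  have h := bWord_prefix_aWord_succ m
  have hb := bLen_of_odd hm
  have ha : aLen m = (aWord m).length := rfl
  rw [diff_eq_getD_of_prefix h (by rw [← bLen]; omega), bWord_of_odd hm, ha,
    List.getD_append_right _ _ _ _ (by omega), List.getD_append _ _ _ _ (by simpa),
    Nat.add_sub_cancel_left]

lemma diff_aLen_add_three_add {m i : ℕ} (hm : m % 2 = 1) (hi : i < aLen m) :
    diff (aLen m + 3 + i) = diff i :=
  (isPalPrefix_aLen m).apply_add (isPalPrefix_bLen m) (by rw [bLen_of_odd hm]; ring) hi

lemma diff_aLen (m : ℕ) : diff (aLen m) = decide (m % 2 = 0) := by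
  rcases Nat.mod_two_eq_zero_or_one m with hm | hm
  · rw [hm]
    exact (diff_aLen_add_of_even (i := 0) hm (aLen_lt_bLen m)).trans (diff_eq_getD (by decide))
  · rw [hm]
    exact diff_aLen_add_of_odd (i := 0) hm (by decide)

lemma diff_aLen_succ (m : ℕ) : diff (aLen (m + 1)) = !diff (aLen m) := by
  rw [diff_aLen, diff_aLen, ← decide_not]
  exact decide_eq_decide.2 (by omega)

lemma diff_bLen_succ (m : ℕ) : diff (bLen (m + 1)) = diff (aLen m) :=
  diff_bLen_succ_add (i := 0) (bLen_lt_aLen_succ _)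

lemma diff_bLen : ∀ m, diff (bLen m) = !diff (aLen m)
  | 0 => by decide
  | m + 1 => by rw [diff_bLen_succ, diff_aLen_succ, Bool.not_not]

lemma diff_aLen_congr {j m : ℕ} (h : j % 2 = m % 2) : diff (aLen j) = diff (aLen m) := by
  rw [diff_aLen, diff_aLen, h]

lemma bLen_add_two_mul_aLen {j m : ℕ} (h : j % 2 = m % 2) :
    bLen m + 2 * aLen j = bLen j + 2 * aLen m := by
  rcases Nat.mod_two_eq_zero_or_one m with hm | hm
  · have := bLen_of_even hm
    have := bLen_of_even (h.trans hm)
    omega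
  · have := bLen_of_odd hm
    have := bLen_of_odd (h.trans hm)
    omega

lemma diff_aLen_add {j m i : ℕ} (hjm : j ≤ m) (h : j % 2 = m % 2) (hi : aLen j + i < bLen j) :
    diff (aLen m + i) = diff (aLen j + i) := by
  have ha := aLen_strictMono.monotone hjm
  have hb := bLen_add_two_mul_aLen h
  rcases Nat.mod_two_eq_zero_or_one m with hm | hm
  · rw [diff_aLen_add_of_even hm (by omega), diff_aLen_add_of_even (h.trans hm) hi]
  · rcases lt_or_ge i 3 with h3 | h3
    · rw [diff_aLen_add_of_odd hm h3, diff_aLen_add_of_odd (h.trans hm) h3]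
    · obtain ⟨i, rfl⟩ := Nat.exists_eq_add_of_le h3
      have := bLen_of_odd (h.trans hm)
      rw [← Nat.add_assoc, ← Nat.add_assoc, diff_aLen_add_three_add hm (by omega),
        diff_aLen_add_three_add (h.trans hm) (by omega)]

lemma diff_aLen_sub_add {j m t : ℕ} (hjm : j ≤ m) (h : j % 2 = m % 2) (ht : t < bLen j) :
    diff (aLen m - aLen j + t) = diff t := by
  have ha := aLen_strictMono.monotone hjm
  rcases lt_or_ge t (aLen j) with htj | htj
  · exact (isPalPrefix_aLen j).apply_add (isPalPrefix_aLen m) (Nat.sub_add_cancel ha) htj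
  · obtain ⟨i, rfl⟩ := Nat.exists_eq_add_of_le htj
    rw [← Nat.add_assoc, Nat.sub_add_cancel ha, diff_aLen_add hjm h ht]

lemma diff_aLen_add_of_add_eq_bLen {j m r : ℕ} (hjm : j < m) (h : j % 2 = m % 2)
    (hr : aLen j + r = bLen j) :
    diff (aLen m + r) = diff (aLen j) := by
  have ha := aLen_strictMono hjm
  have hb := bLen_add_two_mul_aLen h
  rcases Nat.mod_two_eq_zero_or_one m with hm | hm
  · have := bLen_of_even (h.trans hm)
    rw [diff_aLen_add_of_even hm (by omega), show 2 + r = aLen j by omega]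
  · have := bLen_of_odd (h.trans hm)
    rw [show aLen m + r = aLen m + 3 + aLen j by omega, diff_aLen_add_three_add hm ha]

/-! ### Palindromic prefixes of the difference word -/

/-- The lengths of the palindromic prefixes of `diff`; see `IsPalPrefix.isPalLen`. -/
def IsPalLen (q : ℕ) : Prop :=
  q ≤ 2 ∨ ∃ m, q = aLen m ∨ q = bLen m

lemma diff_of_le_two {q : ℕ} (hq : q ≤ 2) : diff q = true := by
  interval_cases q <;> decide

lemma IsPalLen.diff_eq {m q : ℕ} (h : IsPalLen q) (hm : aLen m < q) (hm' : q < bLen (m + 1)) :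
    diff q = !diff (aLen m) := by
  rcases h with h | ⟨j, rfl | rfl⟩
  · have := three_le_aLen m
    omega
  · have h₁ := aLen_strictMono.lt_iff_lt.1 hm
    have h₂ := aLen_strictMono.lt_iff_lt.1 (hm'.trans (bLen_lt_aLen_succ _))
    obtain rfl : j = m + 1 := by omega
    exact diff_aLen_succ m
  · have h₁ := aLen_strictMono.lt_iff_lt.1 (hm.trans (bLen_lt_aLen_succ _))
    have h₂ := bLen_strictMono.lt_iff_lt.1 hm'
    obtain rfl : j = m := by omega
    exact diff_bLen j

lemma IsPalLen.exists_diff_add_ne {m p : ℕ} (h : IsPalLen p) (hm : m % 2 = 0 → 2 < p)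
    (hpm : p < aLen m) : ∃ r, p + r < aLen m ∧ diff (p + r) ≠ diff (aLen m + r) := by
  by_cases hd : diff p = diff (aLen m)
  swap
  · exact ⟨0, hpm, hd⟩
  rw [diff_aLen] at hd
  rcases h with h | ⟨j, rfl | rfl⟩
  · rw [diff_of_le_two h, eq_comm, decide_eq_true_iff] at hd
    exact absurd h (hm hd).not_ge
  · have hjm := aLen_strictMono.lt_iff_lt.1 hpm
    rw [diff_aLen, decide_eq_decide] at hd
    have hr := Nat.add_sub_of_le (aLen_lt_bLen j).le
    refine ⟨bLen j - aLen j, ?_, ?_⟩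
    · rw [hr]
      exact (bLen_lt_aLen_succ j).trans_le (aLen_strictMono.monotone hjm)
    · rw [hr, diff_aLen_add_of_add_eq_bLen hjm (by omega) hr, diff_bLen]
      exact Bool.not_ne_self _
  · have hjm := aLen_strictMono.lt_iff_lt.1 ((aLen_lt_bLen j).trans hpm)
    have ham := aLen_strictMono.monotone hjm
    rw [diff_bLen, diff_aLen, ← decide_not, decide_eq_decide] at hd
    cases j with
    | zero =>
      refine ⟨2, ham.trans_lt' (by decide), ?_⟩
      rw [diff_aLen_add_of_odd (by omega) (by decide)]
      decide
    | succ j =>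
      have hr := Nat.add_sub_of_le (aLen_lt_bLen j).le
      have hb : bLen (j + 1) + (bLen j - aLen j) < aLen (j + 2) := by
        have := aLen_add_two j
        have := bLen_strictMono j.lt_add_one
        omega
      refine ⟨bLen j - aLen j, hb.trans_le ham, ?_⟩
      rw [diff_bLen_succ_add hb, hr,
        diff_aLen_add_of_add_eq_bLen (by omega) (by omega) hr, diff_bLen]
      exact Bool.not_ne_self _

lemma not_isPalPrefix_of_aLen_lt {m q : ℕ} (ih : ∀ p < aLen m, IsPalPrefix diff p → IsPalLen p)
    (hm : aLen m < q) (hm' : q < bLen m) : ¬ IsPalPrefix diff q := by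
  intro hq
  rcases le_or_gt q (2 * aLen m) with hle | hgt
  · obtain ⟨p, hp⟩ := Nat.exists_eq_add_of_le hle
    have hpm : p < aLen m := by omega
    have hpal := ((isPalPrefix_aLen m).reflect (fun i j h _ _ => hq i j h) hm hp.symm).1
    have h2 : m % 2 = 0 → 2 < p := fun h => by
      have := bLen_of_even h
      omega
    obtain ⟨r, hr, hne⟩ := (ih p hpm hpal).exists_diff_add_ne h2 hpm
    exact hne ((isPalPrefix_aLen m).apply_add_eq_of_add_eq_two_mul hq hp.symm (by omega)).symm
  · have hodd : m % 2 = 1 := by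
      by_contra h
      have := bLen_of_even (m := m) (by omega)
      omega
    have hb := bLen_of_odd hodd
    have h3 := three_le_aLen m
    have d0 : diff (aLen m) = false := diff_aLen_add_of_odd (i := 0) hodd (by decide)
    have d1 : diff (aLen m + 1) = true := diff_aLen_add_of_odd hodd (by decide)
    have d2 : diff (aLen m + 2) = false := diff_aLen_add_of_odd hodd (by decide)
    obtain rfl | rfl : q = 2 * aLen m + 1 ∨ q = 2 * aLen m + 2 := by omega
    · have h1 : diff (aLen m - 2) = true :=
        isPalPrefix_aLen m (aLen m - 2) 1 (by omega)
      have := hq (aLen m + 2) (aLen m - 2) (by omega)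
      simp_all
    · have := hq (aLen m) (aLen m + 1) (by omega)
      simp_all

lemma not_isPalPrefix_of_bLen_lt {m q : ℕ} (ih : ∀ p < bLen m, IsPalPrefix diff p → IsPalLen p)
    (hm : bLen m < q) (hm' : q < aLen (m + 1)) : ¬ IsPalPrefix diff q := by
  intro hq
  cases m with
  | zero =>
    have h4 : diff (q - 5) = diff 4 := hq _ _ (by have := bLen_zero; omega)
    rw [bLen_zero] at hm
    rw [zero_add, aLen_one] at hm'
    revert h4
    interval_cases q <;> decide
  | succ m =>
    have ha : aLen (m + 2) + aLen m = 2 * bLen (m + 1) := aLen_add_two m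
    change q < aLen (m + 2) at hm'
    obtain ⟨p, hp⟩ := Nat.exists_eq_add_of_le (show q ≤ 2 * bLen (m + 1) by omega)
    have hpm : p < bLen (m + 1) := by omega
    obtain ⟨hpal, hd⟩ := (isPalPrefix_bLen (m + 1)).reflect (fun i j h _ _ => hq i j h) hm hp.symm
    rw [(ih p hpm hpal).diff_eq (by omega) hpm, diff_bLen_succ] at hd
    exact Bool.not_ne_self _ hd

lemma IsPalPrefix.isPalLen {q : ℕ} (h : IsPalPrefix diff q) : IsPalLen q := by
  induction q using Nat.strong_induction_on with
  | _ q ih =>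
    by_contra hq
    simp only [IsPalLen, not_or, not_exists, not_le] at hq
    obtain ⟨h2, hne⟩ := hq
    obtain ⟨m, hm, hm'⟩ := exists_aLen_lt_le_aLen_succ (lt_of_le_of_ne h2 (Ne.symm (hne 0).1))
    rcases lt_trichotomy q (bLen m) with hb | hb | hb
    · exact not_isPalPrefix_of_aLen_lt (fun p hp => ih p (hp.trans hm)) hm hb h
    · exact (hne m).2 hb
    · exact not_isPalPrefix_of_bLen_lt (fun p hp => ih p (hp.trans hb)) hb
        (lt_of_le_of_ne hm' (hne (m + 1)).1) h

/-! ### The closures defining `u_p` -/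

/-- The infinite word `u_p`; its prefixes `wp n` are found in `wp_two_mul_add_two` and
`wp_two_mul_add_three`. -/
def upWord : ℕ → Bool
  | 0 => true
  | i + 1 => xor (upWord i) (diff i)

lemma upWord_succ (i : ℕ) : upWord (i + 1) = xor (upWord i) (diff i) := rfl

lemma diff_eq_xor (i : ℕ) : diff i = xor (upWord i) (upWord (i + 1)) := by
  rw [upWord_succ, ← Bool.xor_assoc, Bool.xor_self, Bool.false_xor]

lemma upWord_eq_getD {i : ℕ} (hi : i < 10) :
    upWord i = [true, false, true, false, true, true, false, true, false, true].getD i false := by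
  interval_cases i <;> simp [upWord, diff_eq_getD]

lemma IsPalPrefix.xor_upWord {n : ℕ} (h : IsPalPrefix diff n) {i j : ℕ} (hij : i + j = n) :
    xor (upWord i) (upWord j) = !upWord n := by
  induction i generalizing j with
  | zero =>
    rw [← hij, zero_add]
    exact Bool.true_xor _
  | succ i ih =>
    rw [← ih (j := j + 1) (by omega), upWord_succ, upWord_succ, h i j (by omega), Bool.xor_assoc,
      Bool.xor_comm (diff j)]

lemma IsPalPrefix.upWord_reflect {n q m : ℕ} (hn : IsPalPrefix diff n) (hq : IsPalPrefix diff q)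
    (hm : q + m = 2 * n) (hmn : m ≤ n) : upWord q = upWord m := by
  have h₁ := hn.xor_upWord (Nat.add_sub_of_le hmn)
  have h₂ := hq.xor_upWord (i := n) (j := n - m) (by omega)
  grind

lemma upWord_aLen (m : ℕ) : upWord (aLen m) = !diff (aLen m) := by
  induction m using Nat.twoStepInduction with
  | zero => decide
  | one => rw [diff_aLen, aLen_one, upWord_eq_getD (by decide)]; rfl
  | more m ih =>
    rw [(isPalPrefix_bLen (m + 1)).upWord_reflect (isPalPrefix_aLen _) (aLen_add_two m)
      (aLen_lt_bLen_succ m).le, ih, diff_aLen_congr (Nat.add_mod_right m 2)]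

lemma upWord_bLen (m : ℕ) : upWord (bLen m) = !diff (bLen m) := by
  rw [diff_bLen, Bool.not_not]
  rcases Nat.mod_two_eq_zero_or_one m with hm | hm
  · rw [(isPalPrefix_aLen m).upWord_reflect (isPalPrefix_bLen m) (bLen_of_even hm)
      (by have := three_le_aLen m; omega), diff_aLen, hm]
    decide
  · have h := (isPalPrefix_bLen m).xor_upWord (i := aLen m + 1) (j := aLen m + 2)
      (by rw [bLen_of_odd hm]; ring)
    rw [← diff_eq_xor, diff_aLen_add_of_odd hm (by decide)] at h
    rw [diff_aLen, hm]
    simpa using h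

lemma upWord_aLen_add_one (m : ℕ) : upWord (aLen m + 1) = true := by
  rw [upWord_succ, upWord_aLen, Bool.not_xor_self]

lemma upWord_bLen_add_one (m : ℕ) : upWord (bLen m + 1) = true := by
  rw [upWord_succ, upWord_bLen, Bool.not_xor_self]

lemma IsPalLen.upWord_eq {q : ℕ} (h : IsPalLen q) (hq : 2 < q) : upWord q = !diff q := by
  rcases h with h | ⟨m, rfl | rfl⟩
  · exact absurd h hq.not_ge
  · exact upWord_aLen m
  · exact upWord_bLen m

/-- The palindromic closure for `θ = false` and the pseudopalindromic one for `θ = true`. -/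
noncomputable def thetaCl (θ : Bool) (w : Word) : Word :=
  bif θ then epalCl w else palCl w

/-- Palindromes for `θ = false` and `E`-palindromes for `θ = true`. -/
def IsThetaPal (θ : Bool) (w : Word) : Prop :=
  (w.map (xor θ)).reverse = w

lemma isThetaPal_false {w : Word} : IsThetaPal false w ↔ IsPal w := by
  rw [IsThetaPal, show xor false = id from funext Bool.false_xor, List.map_id, IsPal]

lemma isThetaPal_true {w : Word} : IsThetaPal true w ↔ IsEPal w := by
  rw [IsThetaPal, show xor true = not from funext Bool.true_xor, IsEPal, Ebar]

lemma isThetaPal_iff {θ : Bool} {w : Word} :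
    IsThetaPal θ w ↔ ∀ i j (h : i + j + 1 = w.length), w[i] = xor θ w[j] := by
  constructor
  · intro hw i j h
    rw [List.getElem_of_eq hw.symm (by omega), List.getElem_reverse, List.getElem_map]
    congr 2
    rw [List.length_map]
    omega
  · intro hw
    refine List.ext_getElem (by simp) fun i _ hi => ?_
    simp only [List.getElem_reverse, List.getElem_map, List.length_map]
    exact (hw i _ (by omega)).symm

lemma thetaCl_spec (θ : Bool) (w : Word) :
    (w <+: thetaCl θ w ∧ IsThetaPal θ (thetaCl θ w)) ∧
      ∀ v, w <+: v ∧ IsThetaPal θ v → (thetaCl θ w).length ≤ v.length := by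
  cases θ
  · simp only [isThetaPal_false]
    exact (exists_minLength (pal_ext w)).choose_spec
  · simp only [isThetaPal_true]
    exact (exists_minLength (epal_ext w)).choose_spec

/-- The prefix of `u_p` of length `n`. -/
def upPrefix (n : ℕ) : Word := (List.range n).map upWord

lemma length_upPrefix (n : ℕ) : (upPrefix n).length = n := by
  simp [upPrefix]

lemma getElem_upPrefix {n i : ℕ} (h : i < (upPrefix n).length) : (upPrefix n)[i] = upWord i := by
  simp [upPrefix]

lemma upPrefix_succ (n : ℕ) : upPrefix (n + 1) = upPrefix n ++ [upWord n] := by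
  simp [upPrefix, List.range_succ]

lemma upPrefix_prefix_of_le {m n : ℕ} (h : m ≤ n) : upPrefix m <+: upPrefix n := by
  induction h with
  | refl => exact List.prefix_rfl
  | step _ ih => exact ih.trans (upPrefix_succ _ ▸ List.prefix_append _ _)

lemma isThetaPal_upPrefix {θ : Bool} {n : ℕ} (h : IsPalPrefix diff n) (hθ : upWord n = !θ) :
    IsThetaPal θ (upPrefix (n + 1)) := by
  refine isThetaPal_iff.2 fun i j hij => ?_
  have := h.xor_upWord (i := i) (j := j) (by rw [length_upPrefix] at hij; omega)
  rw [getElem_upPrefix, getElem_upPrefix]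
  grind

/-- The first `m` letters of `u_p` do not prevent a word of length `t` extending them from being a
`θ`-palindrome. -/
def ThetaCompatible (θ : Bool) (m t : ℕ) : Prop :=
  ∀ i j, i + j + 1 = t → i < m → j < m → upWord i = xor θ (upWord j)

lemma thetaCompatible_length {θ : Bool} {m : ℕ} {v : Word} (hv : upPrefix m <+: v)
    (hθ : IsThetaPal θ v) : ThetaCompatible θ m v.length := by
  intro i j hij hi hj
  have h := isThetaPal_iff.1 hθ i j hij
  rwa [← hv.getElem (by rwa [length_upPrefix]), ← hv.getElem (by rwa [length_upPrefix]),
    getElem_upPrefix, getElem_upPrefix] at h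

lemma IsThetaPal.eq_of_prefix {θ : Bool} {m : ℕ} {v w : Word} (hv : IsThetaPal θ v)
    (hw : IsThetaPal θ w) (hlen : v.length = w.length) (hm : v.length ≤ 2 * m)
    (hpv : upPrefix m <+: v) (hpw : upPrefix m <+: w) : v = w := by
  have hlow : ∀ i (h : i < v.length), i < m → v[i] = w[i] := fun i h hi => by
    rw [← hpv.getElem (by rwa [length_upPrefix]), ← hpw.getElem (by rwa [length_upPrefix])]
  refine List.ext_getElem hlen fun i hi hi' => ?_
  rcases lt_or_ge i m with him | him
  · exact hlow i hi him
  · rw [isThetaPal_iff.1 hv i (v.length - 1 - i) (by omega),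
      isThetaPal_iff.1 hw i (v.length - 1 - i) (by omega), hlow _ (by omega) (by omega)]

lemma thetaCl_upPrefix {θ : Bool} {m n : ℕ} (hn : IsPalPrefix diff n) (hθ : upWord n = !θ)
    (hmn : m ≤ n + 1) (hnm : n + 1 ≤ 2 * m)
    (hmin : ∀ t, m ≤ t → t ≤ n → ¬ ThetaCompatible θ m t) :
    thetaCl θ (upPrefix m) = upPrefix (n + 1) := by
  obtain ⟨⟨hpre, hpal⟩, hle⟩ := thetaCl_spec θ (upPrefix m)
  have hpal' := isThetaPal_upPrefix hn hθ
  have hle' := hle _ ⟨upPrefix_prefix_of_le hmn, hpal'⟩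
  have hge := hpre.length_le
  rw [length_upPrefix] at hle' hge
  have hlen : (thetaCl θ (upPrefix m)).length = n + 1 := by
    by_contra hne
    exact hmin _ hge (by omega) (thetaCompatible_length hpre hpal)
  exact hpal.eq_of_prefix hpal' (by rw [hlen, length_upPrefix]) (by omega) hpre
    (upPrefix_prefix_of_le hmn)

lemma ThetaCompatible.reflect {θ : Bool} {n t q : ℕ} (hn : IsPalPrefix diff n)
    (h : ThetaCompatible θ (n + 2) t) (ht : n + 2 ≤ t) (hq : t + q = 2 * n + 1) :
    IsPalLen q ∧ diff q = diff n ∧ upWord q = !θ := by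
  have hd : ∀ i j, i + j + 1 = t - 1 → i ≤ n → j ≤ n → diff i = diff j := fun i j hij hi hj => by
    rw [diff_eq_xor, diff_eq_xor, h i (j + 1) (by omega) (by omega) (by omega),
      h (i + 1) j (by omega) (by omega) (by omega)]
    cases θ <;> simp [Bool.xor_comm]
  obtain ⟨hpal, hdq⟩ := hn.reflect hd (by omega) (show t - 1 + q = 2 * n by omega)
  refine ⟨hpal.isPalLen, hdq, ?_⟩
  have h₁ := hn.xor_upWord (i := q) (j := n - q) (by omega)
  have h₂ := h (n - q) n (by omega) (by omega) (by omega)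
  grind

lemma thetaCl_upPrefix_aLen (m : ℕ) :
    thetaCl (diff (bLen m)) (upPrefix (aLen m + 2)) = upPrefix (bLen m + 1) := by
  have hlt := aLen_lt_bLen m
  have hle := bLen_le m
  refine thetaCl_upPrefix (isPalPrefix_bLen m) (upWord_bLen m) (by omega) (by omega)
    fun t ht htb h => ?_
  rw [diff_bLen] at h
  rcases le_or_gt t (2 * aLen m + 1) with hta | hta
  · obtain ⟨q, hq⟩ := Nat.exists_eq_add_of_le hta
    obtain ⟨hlen, hd, hu⟩ := h.reflect (isPalPrefix_aLen m) ht hq.symm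
    have h2 : 2 < q := by
      by_contra! hq2
      rw [diff_of_le_two hq2, diff_aLen, eq_comm, decide_eq_true_iff] at hd
      have := bLen_of_even hd
      omega
    rw [hlen.upWord_eq h2, hd, Bool.not_not] at hu
    exact Bool.not_ne_self _ hu
  · have hodd : m % 2 = 1 := by
      by_contra hm
      have := bLen_of_even (m := m) (by omega)
      omega
    have hθ : (!diff (aLen m)) = true := by rw [diff_aLen, hodd]; rfl
    rw [hθ] at h
    obtain rfl | rfl : t = 2 * aLen m + 2 ∨ t = 2 * aLen m + 3 := by omega
    · have := h (aLen m) (aLen m + 1) (by omega) (by omega) (by omega)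
      rw [upWord_aLen, hθ, upWord_aLen_add_one] at this
      exact absurd this (by decide)
    · have := h (aLen m + 1) (aLen m + 1) (by omega) (by omega) (by omega)
      rw [upWord_aLen_add_one] at this
      exact absurd this (by decide)

lemma not_thetaCompatible_bLen_zero {t : ℕ} (ht : 6 ≤ t) (ht' : t ≤ 9) :
    ¬ ThetaCompatible false 6 t := by
  intro h
  interval_cases t
  · exact absurd (h 1 4 rfl (by decide) (by decide)) (by decide)
  · exact absurd (h 1 5 rfl (by decide) (by decide)) (by decide)
  · exact absurd (h 3 4 rfl (by decide) (by decide)) (by decide)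
  · exact absurd (h 3 5 rfl (by decide) (by decide)) (by decide)

lemma thetaCl_upPrefix_bLen (m : ℕ) :
    thetaCl (diff (aLen (m + 1))) (upPrefix (bLen m + 2)) = upPrefix (aLen (m + 1) + 1) := by
  have hlt := bLen_lt_aLen_succ m
  refine thetaCl_upPrefix (isPalPrefix_aLen _) (upWord_aLen _) (by omega) ?_ fun t ht hta h => ?_
  · cases m with
    | zero => decide
    | succ m =>
      have : aLen (m + 1 + 1) + aLen m = 2 * bLen (m + 1) := aLen_add_two m
      omega
  · cases m with
    | zero => exact not_thetaCompatible_bLen_zero ht hta (by rwa [diff_aLen] at h)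
    | succ m =>
      have ha : aLen (m + 1 + 1) + aLen m = 2 * bLen (m + 1) := aLen_add_two m
      obtain ⟨q, hq⟩ := Nat.exists_eq_add_of_le (show t ≤ 2 * bLen (m + 1) + 1 by omega)
      obtain ⟨hlen, hd, -⟩ := h.reflect (isPalPrefix_bLen _) ht hq.symm
      rw [hlen.diff_eq (m := m) (by omega) (by omega), diff_bLen_succ] at hd
      exact Bool.not_ne_self _ hd

lemma wp_succ (n : ℕ) :
    wp (n + 1) = thetaCl (decide ((n + 1) % 4 = 1 ∨ (n + 1) % 4 = 2)) (wp n ++ [true]) := by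
  rw [wp, thetaCl, Bool.cond_decide]

lemma wp_succ_of_eq_upPrefix {n m k : ℕ} {θ : Bool} (h : wp n = upPrefix m) (hm : upWord m = true)
    (hθ : θ = decide ((n + 1) % 4 = 1 ∨ (n + 1) % 4 = 2))
    (hk : thetaCl θ (upPrefix (m + 1)) = upPrefix k) : wp (n + 1) = upPrefix k := by
  rw [wp_succ, ← hθ, h, ← hk, upPrefix_succ, hm]

lemma wp_one : wp 1 = upPrefix 2 := by
  refine wp_succ_of_eq_upPrefix (m := 0) rfl rfl rfl <|
    thetaCl_upPrefix (fun i j h => by congr 1; omega) rfl (by decide) (by decide)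
      fun t ht ht' h => ?_
  obtain rfl : t = 1 := by omega
  exact absurd (h 0 0 rfl (by decide) (by decide)) (by decide)

lemma wp_two : wp 2 = upPrefix 4 := by
  refine wp_succ_of_eq_upPrefix wp_one (by decide) rfl <|
    thetaCl_upPrefix (isPalPrefix_aLen 0) (by decide) (by decide) (by decide) fun t ht ht' h => ?_
  obtain rfl : t = 3 := le_antisymm ht' ht
  exact absurd (h 1 1 rfl (by decide) (by decide)) (by decide)

lemma wp_two_mul_add_three_of {m : ℕ} (h : wp (2 * m + 2) = upPrefix (aLen m + 1)) :
    wp (2 * m + 3) = upPrefix (bLen m + 1) := by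
  refine wp_succ_of_eq_upPrefix h (upWord_aLen_add_one m) ?_ (thetaCl_upPrefix_aLen m)
  rw [diff_bLen, diff_aLen, ← decide_not]
  exact decide_eq_decide.2 (by omega)

lemma wp_two_mul_add_two (m : ℕ) : wp (2 * m + 2) = upPrefix (aLen m + 1) := by
  induction m with
  | zero => exact wp_two
  | succ m ih =>
    refine wp_succ_of_eq_upPrefix (wp_two_mul_add_three_of ih) (upWord_bLen_add_one m) ?_
      (thetaCl_upPrefix_bLen m)
    rw [diff_aLen]
    exact decide_eq_decide.2 (by omega)

lemma wp_two_mul_add_three (m : ℕ) : wp (2 * m + 3) = upPrefix (bLen m + 1) :=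
  wp_two_mul_add_three_of (wp_two_mul_add_two m)

/-! ### Factor complexity and left special factors -/

section Factors

variable {α : Type*}

/-- The factor of length `n` of the infinite word `f` at position `i`. -/
def window (f : ℕ → α) (n i : ℕ) : Fin n → α := fun t => f (i + t)

/-- The set of factors of length `n` of the infinite word `f`. -/
def factors (f : ℕ → α) (n : ℕ) : Set (Fin n → α) := Set.range (window f n)

/-- The factor complexity of the infinite word `f`. -/
noncomputable def complexity (f : ℕ → α) (n : ℕ) : ℕ := (factors f n).ncard

lemma window_eq_window_iff {f : ℕ → α} {n i j : ℕ} :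
    window f n i = window f n j ↔ ∀ t < n, f (i + t) = f (j + t) := by
  simp only [funext_iff, Fin.forall_iff, window]

lemma window_mem_factors (f : ℕ → α) (n i : ℕ) : window f n i ∈ factors f n :=
  Set.mem_range_self i

lemma cons_window (f : ℕ → α) (n i : ℕ) :
    (Fin.cons (f i) (window f n (i + 1)) : Fin (n + 1) → α) = window f (n + 1) i := by
  funext t
  cases t using Fin.cases with
  | zero => rfl
  | succ t => simp [window, add_assoc, add_comm 1]

lemma IsPalPrefix.window_add {f : ℕ → α} {m n k x i : ℕ} (hm : IsPalPrefix f m)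
    (hn : IsPalPrefix f n) (hx : x + m = n) (hk : i + k ≤ m) :
    window f k (x + i) = window f k i :=
  window_eq_window_iff.2 fun t ht => by rw [add_assoc, hm.apply_add hn hx (by omega)]

lemma complexity_le_of_forall_exists {f : ℕ → α} {n L : ℕ}
    (h : ∀ i, ∃ k ≤ L, window f n k = window f n i) : complexity f n ≤ L + 1 := by
  have hsub : factors f n ⊆ (window f n '' Finset.range (L + 1)) := by
    rintro _ ⟨i, rfl⟩
    obtain ⟨k, hk, hki⟩ := h i
    exact ⟨k, by simpa using Nat.lt_succ_of_le hk, hki⟩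
  calc complexity f n
      ≤ (window f n '' Finset.range (L + 1)).ncard :=
        Set.ncard_le_ncard hsub ((Finset.finite_toSet _).image _)
    _ ≤ (Finset.range (L + 1) : Set ℕ).ncard := Set.ncard_image_le (Finset.finite_toSet _)
    _ = L + 1 := by rw [Set.ncard_coe_finset, Finset.card_range]

end Factors

lemma infix_upPrefix_iff {v : Word} {n : ℕ} :
    v <:+: upPrefix n ↔ ∃ i, v.length + i ≤ n ∧ List.ofFn (window upWord v.length i) = v := by
  rw [List.infix_iff_getElem?, length_upPrefix]
  refine exists_congr fun i => and_congr_right fun hi => ?_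
  constructor
  · intro h
    refine List.ext_getElem (List.length_ofFn ..) fun k _ hk => ?_
    have := h k hk
    rw [List.getElem?_eq_getElem (by rw [length_upPrefix]; omega), getElem_upPrefix] at this
    rw [List.getElem_ofFn, ← Option.some_inj.1 this, add_comm]
    rfl
  · intro h k hk
    rw [List.getElem?_eq_getElem (by rw [length_upPrefix]; omega), getElem_upPrefix,
      List.getElem_of_eq h.symm hk, List.getElem_ofFn, add_comm]
    rfl

lemma exists_wp_eq_upPrefix : ∀ n, ∃ k, wp n = upPrefix k
  | 0 => ⟨0, rfl⟩
  | 1 => ⟨2, wp_one⟩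
  | n + 2 => by
    rcases Nat.even_or_odd' n with ⟨m, rfl | rfl⟩
    · exact ⟨_, wp_two_mul_add_two m⟩
    · exact ⟨_, wp_two_mul_add_three m⟩

lemma factorUp_iff {v : Word} :
    FactorUp v ↔ ∃ i, List.ofFn (window upWord v.length i) = v := by
  constructor
  · rintro ⟨n, hn⟩
    obtain ⟨k, hk⟩ := exists_wp_eq_upPrefix n
    obtain ⟨i, -, hi⟩ := infix_upPrefix_iff.1 (hk ▸ hn)
    exact ⟨i, hi⟩
  · rintro ⟨i, hi⟩
    refine ⟨2 * (v.length + i) + 2, ?_⟩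
    rw [wp_two_mul_add_two]
    exact infix_upPrefix_iff.2 ⟨i, (lt_aLen _).le.trans (Nat.le_succ _), hi⟩

lemma Cp_eq_complexity (n : ℕ) : Cp n = complexity upWord n := by
  have h : {v : Word | FactorUp v ∧ v.length = n} = List.ofFn '' factors upWord n := by
    ext v
    constructor
    · rintro ⟨hv, rfl⟩
      obtain ⟨i, hi⟩ := factorUp_iff.1 hv
      exact ⟨_, window_mem_factors _ _ i, hi⟩
    · rintro ⟨_, ⟨i, rfl⟩, rfl⟩
      exact ⟨factorUp_iff.2 ⟨i, by rw [List.length_ofFn]⟩, List.length_ofFn⟩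
  rw [Cp, h, complexity, Set.ncard_image_of_injective _ List.ofFn_injective]

lemma upWord_complement {m s : ℕ} (hs : s + aLen m = bLen m) :
    ∀ i ≤ aLen m, upWord (s + i) = !upWord i := by
  intro i hi
  induction i with
  | zero =>
    have h := (isPalPrefix_bLen m).xor_upWord hs
    rw [upWord_aLen, upWord_bLen, diff_bLen, Bool.not_not] at h
    rw [add_zero]
    change upWord s = false
    grind
  | succ i ih =>
    rw [← add_assoc, upWord_succ, upWord_succ, ih (by omega),
      (isPalPrefix_aLen m).apply_add (isPalPrefix_bLen m) hs hi, Bool.not_xor]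

/-- The first letter of a word together with its difference word. -/
def headDiff {n : ℕ} (v : Fin (n + 1) → Bool) : Bool × (Fin n → Bool) :=
  (v 0, fun t => xor (v t.castSucc) (v t.succ))

lemma headDiff_injective (n : ℕ) : Function.Injective (headDiff (n := n)) := by
  intro v w h
  obtain ⟨h₀, hd⟩ := Prod.ext_iff.1 h
  funext t
  induction t using Fin.induction with
  | zero => exact h₀
  | succ t ih =>
    have ht : xor (v t.castSucc) (v t.succ) = xor (w t.castSucc) (w t.succ) := congrFun hd t
    rwa [ih, Bool.xor_right_inj] at ht

lemma headDiff_window (n i : ℕ) :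
    headDiff (window upWord (n + 1) i) = (upWord i, window diff n i) := by
  refine Prod.ext rfl (funext fun t => ?_)
  exact (diff_eq_xor (i + t)).symm

lemma exists_upWord_eq_window_diff_eq (b : Bool) (n i : ℕ) :
    ∃ j, upWord j = b ∧ window diff n j = window diff n i := by
  by_cases h : upWord i = b
  · exact ⟨i, h, rfl⟩
  · have hlen := lt_aLen (i + n)
    have hs := Nat.sub_add_cancel (aLen_lt_bLen (i + n)).le
    refine ⟨bLen (i + n) - aLen (i + n) + i, ?_, window_eq_window_iff.2 fun t ht => ?_⟩
    · rw [upWord_complement hs i (by omega), Bool.not_eq_eq_eq_not, Bool.eq_not]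
      exact h
    · rw [add_assoc, (isPalPrefix_aLen _).apply_add (isPalPrefix_bLen _) hs (by omega)]

lemma Cp_succ (n : ℕ) : Cp (n + 1) = 2 * complexity diff n := by
  have h : headDiff '' factors upWord (n + 1) = Set.univ ×ˢ factors diff n := by
    ext ⟨b, w⟩
    constructor
    · rintro ⟨_, ⟨i, rfl⟩, hi⟩
      rw [headDiff_window] at hi
      exact ⟨trivial, i, (Prod.ext_iff.1 hi).2⟩
    · rintro ⟨-, i, rfl⟩
      obtain ⟨j, hj, hji⟩ := exists_upWord_eq_window_diff_eq b n i
      exact ⟨_, window_mem_factors _ _ j, by rw [headDiff_window, hj, hji]⟩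
  rw [Cp_eq_complexity, complexity, ← Set.ncard_image_of_injective _ (headDiff_injective n), h,
    Set.ncard_prod, Set.ncard_univ, Nat.card_eq_fintype_card, Fintype.card_bool, complexity]

section LeftSpecial

variable {f : ℕ → Bool} {n : ℕ}

/-- The word `w` is a left special factor of `f`: both its extensions by one letter to the left are
factors. -/
def LeftSpecial (f : ℕ → Bool) {n : ℕ} (w : Fin n → Bool) : Prop :=
  ∀ b, (Fin.cons b w : Fin (n + 1) → Bool) ∈ factors f (n + 1)

lemma leftSpecial_window {x y : ℕ} (hne : f x ≠ f y)
    (h : window f n (x + 1) = window f n (y + 1)) : LeftSpecial f (window f n (y + 1)) := by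
  intro b
  rcases Bool.eq_or_eq_not b (f y) with rfl | rfl
  · exact ⟨y, (cons_window f n y).symm⟩
  · exact ⟨x, by rw [← cons_window, h, Bool.eq_not.2 hne]⟩

lemma leftSpecial_prefix {p p' q q' : ℕ} (hp : IsPalPrefix f p) (hp' : IsPalPrefix f p')
    (hq : IsPalPrefix f q) (hq' : IsPalPrefix f q') (hpq : p < q) (hpq' : p' < q')
    (hne : f p ≠ f p') (hn : n ≤ p) (hn' : n ≤ p') : LeftSpecial f (window f n 0) := by
  obtain ⟨x, rfl⟩ := Nat.exists_eq_add_of_lt hpq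
  obtain ⟨y, rfl⟩ := Nat.exists_eq_add_of_lt hpq'
  have hx : window f n (x + 1) = window f n 0 := hp.window_add (i := 0) hq (by ring) (by omega)
  have hy : window f n (y + 1) = window f n 0 := hp'.window_add (i := 0) hq' (by ring) (by omega)
  rw [hq p x rfl, hq' p' y rfl] at hne
  exact hy ▸ leftSpecial_window hne (hx.trans hy.symm)

/-- The words that extend to the left by the letter `b` to a factor of `f` of length `n + 1`. -/
def extendableBy (f : ℕ → Bool) (n : ℕ) (b : Bool) : Set (Fin n → Bool) :=
  {w | Fin.cons b w ∈ factors f (n + 1)}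

lemma extendableBy_subset_factors (b : Bool) : extendableBy f n b ⊆ factors f n := by
  rintro w ⟨i, hi⟩
  rw [← cons_window] at hi
  exact ⟨i + 1, (Fin.cons_injective2 hi).2⟩

lemma extendableBy_union {j : ℕ} (hj : window f n (j + 1) = window f n 0) :
    extendableBy f n false ∪ extendableBy f n true = factors f n := by
  refine (Set.union_subset (extendableBy_subset_factors _)
    (extendableBy_subset_factors _)).antisymm ?_
  have hmem : ∀ i, window f n (i + 1) ∈ extendableBy f n (f i) :=
    fun i => ⟨i, (cons_window f n i).symm⟩
  have hsub : ∀ b, extendableBy f n b ⊆ extendableBy f n false ∪ extendableBy f n true :=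
    Bool.forall_bool.2 ⟨Set.subset_union_left, Set.subset_union_right⟩
  rintro _ ⟨_ | i, rfl⟩
  · exact hsub _ (hj ▸ hmem j)
  · exact hsub _ (hmem i)

lemma extendableBy_inter :
    extendableBy f n false ∩ extendableBy f n true = {w | LeftSpecial f w} :=
  Set.ext fun w => (Bool.forall_bool (p := fun b => w ∈ extendableBy f n b)).symm

lemma complexity_succ_eq_add : complexity f (n + 1) =
    (extendableBy f n false).ncard + (extendableBy f n true).ncard := by
  have hcons : Fin.cons false '' extendableBy f n false ∪ Fin.cons true '' extendableBy f n true =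
      factors f (n + 1) := by
    ext v
    constructor
    · rintro (⟨w, hw, rfl⟩ | ⟨w, hw, rfl⟩) <;> exact hw
    · intro hv
      rw [← Fin.cons_self_tail v] at hv ⊢
      generalize v 0 = b at *
      cases b
      exacts [Or.inl ⟨_, hv, rfl⟩, Or.inr ⟨_, hv, rfl⟩]
  have hdisj : Disjoint (Fin.cons (α := fun _ => Bool) false '' extendableBy f n false)
      (Fin.cons true '' extendableBy f n true) :=
    Set.disjoint_image_image fun v _ w _ h => Bool.false_ne_true (Fin.cons_injective2 h).1
  rw [complexity, ← hcons, Set.ncard_union_eq hdisj,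
    Set.ncard_image_of_injective _ (Fin.cons_right_injective _),
    Set.ncard_image_of_injective _ (Fin.cons_right_injective _)]

lemma complexity_succ {j : ℕ} (hj : window f n (j + 1) = window f n 0) :
    complexity f (n + 1) = complexity f n + {w : Fin n → Bool | LeftSpecial f w}.ncard := by
  rw [complexity_succ_eq_add, ← Set.ncard_union_add_ncard_inter, extendableBy_union hj,
    extendableBy_inter, complexity]

end LeftSpecial

/-! ### Left special factors of the difference word -/

/-- The factor of length `n` of `diff` which, for `bLen m < n`, leaves the prefix of `diff` exactly
at the letter of index `bLen m`. -/
def branch (m n : ℕ) : Fin n → Bool := window diff n (aLen (m + 2) - aLen m)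

lemma diff_branch_add {m t : ℕ} (ht : t < bLen m) : diff (aLen (m + 2) - aLen m + t) = diff t :=
  diff_aLen_sub_add (by omega) (by omega) ht

lemma diff_branch_add_bLen (m : ℕ) : diff (aLen (m + 2) - aLen m + bLen m) = !diff (bLen m) := by
  have ha : aLen m < aLen (m + 2) := aLen_strictMono (by omega)
  have hb := aLen_lt_bLen m
  calc diff (aLen (m + 2) - aLen m + bLen m)
      = diff (aLen (m + 2) + (bLen m - aLen m)) := by congr 1; omega
    _ = diff (aLen m) := diff_aLen_add_of_add_eq_bLen (by omega) (by omega) (by omega)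
    _ = !diff (bLen m) := by rw [diff_bLen, Bool.not_not]

lemma branch_ne_prefix {m n : ℕ} (hn : bLen m < n) : branch m n ≠ window diff n 0 := fun h => by
  have := window_eq_window_iff.1 h _ hn
  rw [diff_branch_add_bLen, zero_add] at this
  exact Bool.not_ne_self _ this

lemma branch_ne_branch {j m n : ℕ} (hjm : j < m) (hn : bLen j < n) : branch j n ≠ branch m n :=
  fun h => by
    have := window_eq_window_iff.1 h _ hn
    rw [diff_branch_add_bLen, diff_branch_add (bLen_strictMono hjm)] at this
    exact Bool.not_ne_self _ this

lemma diff_branch_add_eq {m t : ℕ} (ht : t < bLen (m + 1) + 2 * (bLen m - aLen m)) :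
    diff (bLen (m + 1) - bLen m + t) = diff (aLen (m + 2) - aLen m + t) := by
  have hab := aLen_lt_bLen m
  have hab' := bLen_lt_aLen_succ m
  have hab'' := aLen_lt_bLen (m + 1)
  have ha := aLen_add_two m
  rcases lt_or_ge t (bLen m) with htb | htb
  · rw [diff_branch_add htb]
    exact (isPalPrefix_bLen m).apply_add (isPalPrefix_bLen (m + 1)) (by omega) htb
  · obtain ⟨s, rfl⟩ : ∃ s, t = bLen m - aLen m + s := ⟨t - (bLen m - aLen m), by omega⟩
    have hb := bLen_add_two_mul_aLen (j := m) (m := m + 2) (by omega)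
    have hright : diff (aLen (m + 2) - aLen m + (bLen m - aLen m + s)) = diff s := by
      rw [← add_assoc]
      exact (isPalPrefix_aLen (m + 2)).apply_add (isPalPrefix_bLen (m + 2)) (by omega) (by omega)
    rw [hright]
    rcases lt_or_ge s (bLen (m + 1)) with hs | hs
    · rw [← add_assoc]
      exact (isPalPrefix_bLen (m + 1)).apply_add (isPalPrefix_aLen (m + 2)) (by omega) hs
    · obtain ⟨r, rfl⟩ := Nat.exists_eq_add_of_le hs
      calc diff (bLen (m + 1) - bLen m + (bLen m - aLen m + (bLen (m + 1) + r)))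
          = diff (aLen (m + 2) + r) := by congr 1; omega
        _ = diff (aLen m + r) := diff_aLen_add (by omega) (by omega) (by omega)
        _ = diff (bLen (m + 1) + r) := (diff_bLen_succ_add (by omega)).symm

lemma leftSpecial_branch {m n : ℕ} (hn : n ≤ bLen (m + 1) + 2 * (bLen m - aLen m)) :
    LeftSpecial diff (branch m n) := by
  obtain ⟨x, hx⟩ := Nat.exists_eq_add_of_lt (bLen_strictMono m.lt_add_one)
  obtain ⟨y, hy⟩ := Nat.exists_eq_add_of_lt (aLen_strictMono (show m < m + 2 by omega))
  have hx' : bLen (m + 1) - bLen m = x + 1 := by omega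
  have hy' : aLen (m + 2) - aLen m = y + 1 := by omega
  have hne : diff x ≠ diff y := by
    rw [isPalPrefix_bLen (m + 1) x (bLen m) (by omega),
      isPalPrefix_aLen (m + 2) y (aLen m) (by omega), diff_bLen]
    exact Bool.not_ne_self _
  rw [branch, hy']
  refine leftSpecial_window hne (window_eq_window_iff.2 fun t ht => ?_)
  rw [← hx', ← hy']
  exact diff_branch_add_eq (ht.trans_le hn)

lemma leftSpecial_diff_prefix (n : ℕ) : LeftSpecial diff (window diff n 0) :=
  leftSpecial_prefix (isPalPrefix_bLen n) (isPalPrefix_aLen n) (isPalPrefix_aLen (n + 1))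
    (isPalPrefix_bLen n) (bLen_lt_aLen_succ n) (aLen_lt_bLen n)
    (by rw [diff_bLen]; exact Bool.not_ne_self _) ((lt_aLen n).trans (aLen_lt_bLen n)).le
    (lt_aLen n).le

lemma complexity_diff_succ (n : ℕ) : complexity diff (n + 1) =
    complexity diff n + {w : Fin n → Bool | LeftSpecial diff w}.ncard := by
  obtain ⟨j, hj⟩ := Nat.exists_eq_add_of_lt (aLen_lt_bLen n)
  exact complexity_succ (j := j)
    ((isPalPrefix_aLen n).window_add (i := 0) (isPalPrefix_bLen n) (by omega)
      ((zero_add n).trans_le (lt_aLen n).le))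

lemma complexity_diff_add_two_le {m n : ℕ} (hn : bLen m < n)
    (hn' : n ≤ bLen (m + 1) + 2 * (bLen m - aLen m)) :
    complexity diff n + 2 ≤ complexity diff (n + 1) := by
  rw [complexity_diff_succ, Nat.add_le_add_iff_left]
  exact (Set.one_lt_ncard_iff).2 ⟨branch m n, window diff n 0, leftSpecial_branch hn',
    leftSpecial_diff_prefix n, branch_ne_prefix hn⟩

lemma complexity_diff_add_three_le {m n : ℕ} (hn : bLen (m + 1) < n)
    (hn' : n ≤ bLen (m + 1) + 2 * (bLen m - aLen m)) :
    complexity diff n + 3 ≤ complexity diff (n + 1) := by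
  have hb : bLen m < bLen (m + 1) := bLen_strictMono m.lt_add_one
  have hnext : n ≤ bLen (m + 2) + 2 * (bLen (m + 1) - aLen (m + 1)) :=
    (hn'.trans (bLen_succ_add_lt_bLen_add_two m).le).trans (Nat.le_add_right _ _)
  rw [complexity_diff_succ, Nat.add_le_add_iff_left]
  exact (Set.two_lt_ncard_iff).2 ⟨branch m n, branch (m + 1) n, window diff n 0,
    leftSpecial_branch hn', leftSpecial_branch hnext, leftSpecial_diff_prefix n,
    branch_ne_branch m.lt_add_one (hb.trans hn), branch_ne_prefix (hb.trans hn),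
    branch_ne_prefix hn⟩

lemma add_mul_le_apply_add {f : ℕ → ℕ} {k p d : ℕ}
    (h : ∀ i < d, f (p + i) + k ≤ f (p + i + 1)) : f p + k * d ≤ f (p + d) := by
  induction d with
  | zero => rfl
  | succ d ih =>
    calc f p + k * (d + 1) = f p + k * d + k := by ring
      _ ≤ f (p + d) + k := Nat.add_le_add_right (ih fun i hi => h i (hi.trans d.lt_add_one)) k
      _ ≤ f (p + d + 1) := h d d.lt_add_one

/-- One more than the length up to which the factors `branch m n` are shown to be left special. The
complexity of `u_p` is bounded from below along this sequence of lengths. -/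
def branchEnd (m : ℕ) : ℕ := bLen (m + 1) + 2 * (bLen m - aLen m) + 1

/-- Between `branchEnd m` and `branchEnd (m + 1)` the complexity grows by `2` at each step, and by
`3` at the last `2 * (bLen (m + 1) - aLen (m + 1))` steps. -/
lemma complexity_branchEnd_succ (m : ℕ) :
    complexity diff (branchEnd m) + 2 * branchEnd (m + 1) + 2 * (bLen (m + 1) - aLen (m + 1)) ≤
      complexity diff (branchEnd (m + 1)) + 2 * branchEnd m := by
  have hend : branchEnd (m + 1) = bLen (m + 2) + 1 + 2 * (bLen (m + 1) - aLen (m + 1)) :=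
    add_right_comm ..
  obtain ⟨d, hd⟩ : ∃ d, bLen (m + 2) + 1 = branchEnd m + d :=
    Nat.exists_eq_add_of_le (Nat.succ_le_succ (bLen_succ_add_lt_bLen_add_two m).le)
  have hstart : bLen (m + 1) < branchEnd m := Nat.lt_succ_of_le (Nat.le_add_right _ _)
  have htwo : complexity diff (branchEnd m) + 2 * d ≤ complexity diff (bLen (m + 2) + 1) := by
    rw [hd]
    refine add_mul_le_apply_add fun i hi => complexity_diff_add_two_le (m := m + 1) (by omega) ?_
    change branchEnd m + i ≤ bLen (m + 2) + _
    omega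
  have hthree : complexity diff (bLen (m + 2) + 1) + 3 * (2 * (bLen (m + 1) - aLen (m + 1))) ≤
      complexity diff (branchEnd (m + 1)) := by
    rw [hend]
    refine add_mul_le_apply_add fun i hi => ?_
    refine complexity_diff_add_three_le (m := m + 1) (?_ : bLen (m + 2) < _)
      (?_ : _ ≤ bLen (m + 2) + _) <;> omega
  omega

lemma two_mul_branchEnd_add_le (m : ℕ) :
    2 * branchEnd m + aLen (m + 1) ≤ complexity diff (branchEnd m) + aLen m + 54 := by
  induction m with
  | zero =>
    change 57 ≤ _ + 3 + 54
    omega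
  | succ m ih =>
    have hgrowth := complexity_branchEnd_succ m
    have ha : aLen (m + 1 + 1) + aLen m = 2 * bLen (m + 1) := aLen_add_two m
    omega

/-! ### Linear upper bound -/

lemma exists_lt_window_diff_eq_of_le_aLen {m n i : ℕ} (hn : n ≤ aLen m)
    (hi : bLen (m + 1) < i + n) (hi' : i + n ≤ aLen (m + 2)) :
    ∃ k < i, window diff n k = window diff n i := by
  have ha := aLen_add_two m
  obtain ⟨k, rfl⟩ : ∃ k, i = bLen (m + 1) - aLen m + k := Nat.exists_eq_add_of_le (by omega)
  refine ⟨k, by omega, Eq.symm ?_⟩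
  exact (isPalPrefix_bLen (m + 1)).window_add (isPalPrefix_aLen (m + 2)) (by omega) (by omega)

lemma exists_lt_window_diff_eq_of_le_bLen {j m n i : ℕ} (hjm : j + 1 < m) (hn : n ≤ aLen j)
    (hi : aLen m < i + n) (hi' : i + n ≤ bLen m) :
    ∃ k < i, window diff n k = window diff n i := by
  rcases le_or_gt (bLen m - aLen m) i with hσ | hσ
  · obtain ⟨k, rfl⟩ := Nat.exists_eq_add_of_le hσ
    refine ⟨k, by omega, Eq.symm ?_⟩
    exact (isPalPrefix_aLen m).window_add (isPalPrefix_bLen m) (by omega) (by omega)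
  · obtain ⟨p, hjp, hpm, hp⟩ : ∃ p, j ≤ p ∧ p < m ∧ p % 2 = m % 2 := by
      rcases Nat.mod_two_eq_zero_or_one (m - j) with h | h
      exacts [⟨j, by omega⟩, ⟨j + 1, by omega⟩]
    have haj := aLen_strictMono.monotone hjp
    have ham := aLen_strictMono hpm
    have hb := bLen_add_two_mul_aLen hp
    obtain ⟨k, rfl⟩ : ∃ k, i = aLen m - aLen p + k := Nat.exists_eq_add_of_le (by omega)
    refine ⟨k, by omega, Eq.symm (window_eq_window_iff.2 fun t ht => ?_)⟩
    rw [add_assoc]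
    exact diff_aLen_sub_add hpm.le hp (by omega)

lemma exists_lt_window_diff_eq {j n i : ℕ} (hn : n ≤ aLen j) (hi : bLen (j + 1) < i + n) :
    ∃ k < i, window diff n k = window diff n i := by
  obtain ⟨m, hm, hm'⟩ := exists_aLen_lt_le_aLen_succ
    ((three_le_aLen (j + 1)).trans_lt ((aLen_lt_bLen _).trans hi))
  rcases lt_or_ge (bLen m) (i + n) with hbm | hbm
  · have hjm : j < m := Nat.lt_of_succ_lt_succ
      (aLen_strictMono.lt_iff_lt.1 ((aLen_lt_bLen _).trans (hi.trans_le hm')))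
    obtain ⟨m, rfl⟩ := Nat.exists_eq_add_one_of_ne_zero (Nat.ne_zero_of_lt hjm)
    exact exists_lt_window_diff_eq_of_le_aLen
      (hn.trans (aLen_strictMono.monotone (Nat.le_of_lt_succ hjm))) hbm hm'
  · exact exists_lt_window_diff_eq_of_le_bLen (bLen_strictMono.lt_iff_lt.1 (hi.trans_le hbm)) hn
      hm hbm

lemma exists_add_le_window_diff_eq {j n : ℕ} (hn : n ≤ aLen j) (i : ℕ) :
    ∃ k, k + n ≤ bLen (j + 1) ∧ window diff n k = window diff n i := by
  induction i using Nat.strong_induction_on with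
  | _ i ih =>
    rcases le_or_gt (i + n) (bLen (j + 1)) with hi | hi
    · exact ⟨i, hi, rfl⟩
    · obtain ⟨k, hki, hk⟩ := exists_lt_window_diff_eq hn hi
      obtain ⟨l, hl, hlk⟩ := ih k hki
      exact ⟨l, hl, hlk.trans hk⟩

lemma complexity_diff_le {n : ℕ} (hn : 3 < n) : complexity diff n ≤ 75 * n := by
  obtain ⟨j, hj, hj'⟩ := exists_aLen_lt_le_aLen_succ hn
  have : complexity diff n ≤ bLen (j + 2) + 1 := complexity_le_of_forall_exists fun i => by
    obtain ⟨k, hk, hki⟩ := exists_add_le_window_diff_eq hj' i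
    exact ⟨k, (Nat.le_add_right _ _).trans hk, hki⟩
  have := bLen_le (j + 2)
  have := aLen_succ_le j
  have : aLen (j + 2) ≤ 5 * aLen (j + 1) := aLen_succ_le (j + 1)
  omega

lemma Cp_le {n : ℕ} (hn : 5 ≤ n) : Cp n ≤ 150 * n := by
  obtain ⟨n, rfl⟩ := Nat.exists_eq_succ_of_ne_zero (Nat.ne_zero_of_lt hn)
  have := complexity_diff_le (show 3 < n by omega)
  rw [Cp_succ]
  omega

lemma isBoundedUnder_Cp_div :
    IsBoundedUnder (· ≤ ·) atTop fun n : ℕ => (Cp n : ℝ) / n := by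
  refine isBoundedUnder_of_eventually_le (a := 150) ?_
  filter_upwards [eventually_ge_atTop 5] with n hn
  rw [div_le_iff₀ (by positivity)]
  exact_mod_cast Cp_le hn

/-! ### Lower bound for the limsup -/

/-- `2 + √3` and `2 - √3` are the roots of `x ^ 2 - 4 * x + 1`, the characteristic polynomial of the
recurrence satisfied by `aLen` up to a bounded error. -/
lemma two_add_sqrt_three_mul_aLen_le (m : ℕ) : (2 + √3) * aLen m ≤ aLen (m + 1) + 6 := by
  have hs : √3 * √3 = 3 := Real.mul_self_sqrt (by norm_num)
  have hs₁ : 5 / 3 ≤ √3 := Real.le_sqrt_of_sq_le (by norm_num)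
  have hs₂ : √3 ≤ 2 := (Real.sqrt_le_left zero_le_two).2 (by norm_num)
  induction m with
  | zero =>
    rw [aLen_zero, aLen_one]
    push_cast
    linarith
  | succ m ih =>
    have hrec : (4 * aLen (m + 1) : ℝ) ≤ aLen (m + 2) + aLen m + 4 := by
      exact_mod_cast four_mul_aLen_succ_le m
    change (2 + √3) * aLen (m + 1) ≤ aLen (m + 2) + 6
    calc (2 + √3) * aLen (m + 1)
        = 4 * aLen (m + 1) - (2 - √3) * aLen (m + 1) := by ring
      _ ≤ 4 * aLen (m + 1) - (2 - √3) * ((2 + √3) * aLen m - 6) := by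
        gcongr
        linarith
      _ = 4 * aLen (m + 1) - aLen m + 6 * (2 - √3) := by linear_combination aLen m * hs
      _ ≤ aLen (m + 2) + 6 := by linarith

lemma branchEnd_add_one_le (m : ℕ) : branchEnd m + 1 ≤ 2 * aLen (m + 1) + 2 * aLen m + 11 := by
  have := bLen_le (m + 1)
  have := bLen_le m
  unfold branchEnd
  omega

lemma le_Cp_branchEnd (m : ℕ) :
    (4 + √3 / 3) * (branchEnd m + 1 : ℕ) - 124 ≤ Cp (branchEnd m + 1) := by
  have hs : √3 * √3 = 3 := Real.mul_self_sqrt (by norm_num)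
  have hs₀ : 0 ≤ √3 := Real.sqrt_nonneg 3
  have hs₂ : √3 ≤ 2 := (Real.sqrt_le_left zero_le_two).2 (by norm_num)
  have hgrowth : (2 * branchEnd m + aLen (m + 1) : ℝ) ≤
      complexity diff (branchEnd m) + aLen m + 54 := by
    exact_mod_cast two_mul_branchEnd_add_le m
  have hend : (branchEnd m + 1 : ℝ) ≤ 2 * aLen (m + 1) + 2 * aLen m + 11 := by
    exact_mod_cast branchEnd_add_one_le m
  have hratio : (3 + √3) * aLen m ≤ (3 - √3) * (aLen (m + 1) + 6) := by
    calc (3 + √3) * aLen m = (3 - √3) * ((2 + √3) * aLen m) := by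
          linear_combination aLen m * hs
      _ ≤ (3 - √3) * (aLen (m + 1) + 6) :=
        mul_le_mul_of_nonneg_left (two_add_sqrt_three_mul_aLen_le m) (by linarith)
  have hscaled : √3 / 3 * (branchEnd m + 1 : ℝ) ≤
      √3 / 3 * (2 * aLen (m + 1) + 2 * aLen m + 11) :=
    mul_le_mul_of_nonneg_left hend (by positivity)
  rw [Cp_succ]
  push_cast
  linarith

lemma tendsto_branchEnd : Tendsto (fun m => branchEnd m + 1) atTop atTop := by
  refine tendsto_atTop_mono (fun m => ?_) tendsto_id
  have := lt_aLen (m + 1)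
  have := aLen_lt_bLen (m + 1)
  unfold branchEnd
  simp only [id]
  omega

lemma le_limsup_div_of_tendsto {g : ℕ → ℝ} {φ : ℕ → ℕ} {c K : ℝ} (hφ : Tendsto φ atTop atTop)
    (hg : IsBoundedUnder (· ≤ ·) atTop fun n : ℕ => g n / n)
    (h : ∀ m, c * φ m - K ≤ g (φ m)) : c ≤ atTop.limsup fun n : ℕ => g n / n := by
  refine le_of_forall_pos_sub_le fun ε hε => le_limsup_of_frequently_le ?_ hg
  refine hφ.frequently (Eventually.frequently ?_)
  have hcast : Tendsto (fun m => (φ m : ℝ)) atTop atTop := tendsto_natCast_atTop_atTop.comp hφ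
  filter_upwards [hcast.eventually_ge_atTop (K / ε), hcast.eventually_gt_atTop 0] with m hK hpos
  rw [div_le_iff₀ hε] at hK
  rw [le_div_iff₀ hpos]
  linarith [h m]

lemma four_add_sqrt_three_div_three_le_limsup :
    4 + √3 / 3 ≤ atTop.limsup fun n : ℕ => (Cp n : ℝ) / n :=
  le_limsup_div_of_tendsto tendsto_branchEnd isBoundedUnder_Cp_div le_Cp_branchEnd

lemma conjugate_ratio_eq : (7 - 4 * √3 + 5) / (7 + 4 * √3 + 5) *
    (2 * (7 + 4 * √3) / (7 + 4 * √3 - 1)) = √3 / 3 := by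
  have hs : √3 * √3 = 3 := Real.mul_self_sqrt (by norm_num)
  have h₁ : 7 + 4 * √3 + 5 ≠ 0 := by positivity
  have h₂ : 7 + 4 * √3 - 1 ≠ 0 := by
    have := Real.sqrt_nonneg 3
    linarith
  rw [div_mul_div_comm, div_eq_div_iff (mul_ne_zero h₁ h₂) three_ne_zero]
  linear_combination (-168 - 16 * √3) * hs

end Pseudostandard

/-- `limsup C(n)/n ≥ 4 + ((τ'+5)/(τ+5))·(2τ/(τ-1))` where `τ = 7+4√3`,
`τ' = 7-4√3`; in particular `limsup C(n)/n ≥ 4.577`. -/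
theorem limsup_complexity_lower_bound :
    (4 + ((7 - 4 * Real.sqrt 3 + 5) / (7 + 4 * Real.sqrt 3 + 5))
        * (2 * (7 + 4 * Real.sqrt 3) / (7 + 4 * Real.sqrt 3 - 1)) : ℝ)
      ≤ Filter.atTop.limsup (fun n : ℕ => (Cp n : ℝ) / n) ∧
    (4.577 : ℝ) ≤ Filter.atTop.limsup (fun n : ℕ => (Cp n : ℝ) / n) := by
  rw [Pseudostandard.conjugate_ratio_eq]
  have h := Pseudostandard.four_add_sqrt_three_div_three_le_limsup
  have hs : (1.732 : ℝ) ≤ √3 := Real.le_sqrt_of_sq_le (by norm_num)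
  exact ⟨h, le_trans (by linarith) h⟩
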